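/- Let λ be a d-invariant rational lamination. If L is an infinite λ-unlinked class which is periodic, say m_d^n(L) = L, then the total degree δ^n(L) = ∏_{k=0}^{n-1} δ(m_d^k(L)) is strictly greater than 1, where δ(L') denotes the degree of the induced covering map on closure(L')/λ̂ ≅ R/Z. -/

import Mathlib

noncomputable section
open Set Function

/-- The circle `ℝ/ℤ`. -/
abbrev Circle1 := AddCircle (1 : ℝ)

/-- Multiplication by `d` on the circle. -/
def md (d : ℕ) (x : Circle1) : Circle1 := d • x

/-- The rational angles `ℚ/ℤ ⊆ ℝ/ℤ`. -/
def ratC : Set Circle1 := {x | ∃ q : ℚ, x = ((q : ℝ) : Circle1)}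

/-- `A` and `B` are unlinked: `B` is contained in a single connected
component of the complement of `A`. -/
def Unlinked (A B : Set Circle1) : Prop :=
  ∃ x ∈ Aᶜ, B ⊆ connectedComponentIn Aᶜ x

/-- `C` is a connected component of `S`. -/
def IsCompOf (C S : Set Circle1) : Prop :=
  ∃ x ∈ S, C = connectedComponentIn S x

/-- The class of `x` under a relation `r`. -/
def relClass (r : Circle1 → Circle1 → Prop) (x : Circle1) : Set Circle1 := {y | r x y}

/-- A rational lamination: a closed equivalence relation on `ℚ/ℤ` with finite,
pairwise unlinked classes. -/
structure RatLam where
  rel : Circle1 → Circle1 → Prop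
  rel_rat : ∀ x y, rel x y → x ∈ ratC ∧ y ∈ ratC
  refl : ∀ x ∈ ratC, rel x x
  symm : ∀ x y, rel x y → rel y x
  trans : ∀ x y z, rel x y → rel y z → rel x z
  closed' : ∀ x ∈ ratC, ∀ y ∈ ratC,
    (x, y) ∈ closure {p : Circle1 × Circle1 | rel p.1 p.2} → rel x y
  finiteClass : ∀ x, (relClass rel x).Finite
  unlinkedClass : ∀ x y, ¬ rel x y → Unlinked (relClass rel x) (relClass rel y)

/-- `m_d` maps `A` onto `B` in a consecutive-preserving way: the image of `A` is `B`
and the connected components of the complement of `A` are sent to components of the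
complement of `B` endpoint-wise. -/
def ConsecutiveImage (d : ℕ) (A B : Set Circle1) : Prop :=
  md d '' A = B ∧
    ∀ C, IsCompOf C Aᶜ → ∃ C', IsCompOf C' Bᶜ ∧ frontier C' = md d '' frontier C

/-- A `d`-invariant rational lamination. -/
structure InvRatLam (d : ℕ) extends RatLam where
  invariant : ∀ x ∈ ratC,
    ConsecutiveImage d (relClass rel x) (relClass rel (md d x))

/-- `m_d : A → m_d(A)` is `δ`-to-one. -/
def classDeg (d : ℕ) (A : Set Circle1) (δ : ℕ) : Prop :=
  ∀ y ∈ md d '' A, Set.ncard {x | x ∈ A ∧ md d x = y} = δ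

/-- The `λ`-unlinked relation on irrational angles: `θ ~ θ'` iff they lie in the same
connected component of the complement of every `λ`-class. -/
def UnlRel (r : Circle1 → Circle1 → Prop) (θ θ' : Circle1) : Prop :=
  θ ∉ ratC ∧ θ' ∉ ratC ∧
    (θ = θ' ∨ ∀ x ∈ ratC, θ' ∈ connectedComponentIn (relClass r x)ᶜ θ)

/-- `L` is a `λ`-unlinked class. -/
def IsUnlClass (r : Circle1 → Circle1 → Prop) (L : Set Circle1) : Prop :=
  ∃ θ, θ ∉ ratC ∧ L = {θ' | UnlRel r θ θ'}

/-!
Suppose the total degree is `1`. Then `m_D`, with `D = d ^ n`, maps `L` injectively into itself, and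
the noncrossing of `λ` forces it to preserve the cyclic order of `L`: when `p, s ∈ L`, the other
preimages of `m_D(p)` lie in gaps of `L`, and the preimages of `m_D(s)` have to be matched to them
gap by gap. If the closure of `L` contains a rational angle, some iterate of `m_D` fixes one, `z`;
cutting the circle at `z` turns that iterate into a monotone interval map on `L`, whose orbits
converge, against expansion. Otherwise `L` is compact, and a compact set carrying an injective
expanding self-map is finite.
-/

open Filter Topology

/-! ### Expanding and monotone maps -/

theorem injOn_iterate_of_injOn_image {α : Type*} {f : α → α} {s : Set α} {n : ℕ}
    (h : ∀ k < n, InjOn f (f^[k] '' s)) : InjOn f^[n] s := by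
  induction n with
  | zero => exact injOn_id s
  | succ n ih =>
    rw [iterate_succ']
    exact (h n n.lt_succ_self).comp (ih fun k hk => h k (hk.trans n.lt_succ_self))
      (mapsTo_image _ _)

/-- Local expansion: `f` multiplies distances smaller than `δ` by at least `c`. -/
def ExpandsBelow {X : Type*} [Dist X] (f : X → X) (c δ : ℝ) : Prop :=
  ∀ x y, dist x y < δ → c * dist x y ≤ dist (f x) (f y)

namespace ExpandsBelow

variable {X : Type*} [MetricSpace X] {f : X → X} {c δ : ℝ} {K : Set X}

theorem exists_iterate_succ_eq_of_tendsto (hf : ExpandsBelow f c δ) (hc : 1 < c) (hδ : 0 < δ)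
    {x l : X} (hx : Tendsto (fun n => f^[n] x) atTop (𝓝 l)) :
    ∃ n, f^[n + 1] x = f^[n] x := by
  have hstep : Tendsto (fun n => dist (f^[n + 1] x) (f^[n] x)) atTop (𝓝 0) := by
    simpa only [dist_self] using ((tendsto_add_atTop_iff_nat 1).2 hx).dist hx
  obtain ⟨N, hN⟩ := eventually_atTop.1 (hstep.eventually_lt_const hδ)
  refine ⟨N, by_contra fun hne => ?_⟩
  have hgrow : ∀ m, c ^ m * dist (f^[N + 1] x) (f^[N] x) ≤
      dist (f^[N + m + 1] x) (f^[N + m] x) := by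
    intro m
    induction m with
    | zero => simp
    | succ m ih =>
      calc c ^ (m + 1) * dist (f^[N + 1] x) (f^[N] x)
          = c * (c ^ m * dist (f^[N + 1] x) (f^[N] x)) := by ring
        _ ≤ c * dist (f^[N + m + 1] x) (f^[N + m] x) := by gcongr
        _ ≤ dist (f (f^[N + m + 1] x)) (f (f^[N + m] x)) := hf _ _ (hN _ (by omega))
        _ = dist (f^[N + (m + 1) + 1] x) (f^[N + (m + 1)] x) := by
          rw [← iterate_succ_apply' f, ← iterate_succ_apply' f, ← add_assoc]
  obtain ⟨m, hm⟩ := pow_unbounded_of_one_lt (δ / dist (f^[N + 1] x) (f^[N] x)) hc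
  rw [div_lt_iff₀ (dist_pos.2 hne)] at hm
  exact (hm.trans_le (hgrow m)).not_gt (hN _ (by omega))

theorem exists_forall_dist_lt_imp (hf : ExpandsBelow f c δ) (hK : IsCompact K)
    (hcont : ContinuousOn f K) (hinj : InjOn f K) (hδ : 0 < δ) :
    ∃ ε > 0, ∀ x ∈ K, ∀ y ∈ K, dist (f x) (f y) < ε → c * dist x y ≤ dist (f x) (f y) := by
  have hfar : IsCompact ((K ×ˢ K) ∩ {w | δ ≤ dist w.1 w.2}) :=
    (hK.prod hK).inter_right (isClosed_le continuous_const continuous_dist)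
  have hdist : ContinuousOn (fun w : X × X => dist (f w.1) (f w.2))
      ((K ×ˢ K) ∩ {w | δ ≤ dist w.1 w.2}) :=
    continuous_dist.comp_continuousOn ((hcont.comp continuousOn_fst fun _ hw => hw.1.1).prodMk
      (hcont.comp continuousOn_snd fun _ hw => hw.1.2))
  obtain ⟨ε, hε, hmin⟩ := hfar.exists_forall_le' hdist (a := 0) fun w hw =>
    dist_pos.2 fun h => (dist_pos.1 (hδ.trans_le hw.2)) (hinj hw.1.1 hw.1.2 h)
  refine ⟨ε, hε, fun x hx y hy hxy => hf x y ?_⟩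
  by_contra! hge
  exact hxy.not_ge (hmin (x, y) ⟨⟨hx, hy⟩, hge⟩)

end ExpandsBelow

theorem pow_mul_dist_le_dist_iterate {X : Type*} [PseudoMetricSpace X] {f : X → X} {c ε : ℝ}
    {K : Set X} (hc : 1 ≤ c) (hmaps : MapsTo f K K)
    (hback : ∀ x ∈ K, ∀ y ∈ K, dist (f x) (f y) < ε → c * dist x y ≤ dist (f x) (f y))
    (k : ℕ) {x y : X} (hx : x ∈ K) (hy : y ∈ K) (hxy : dist (f^[k] x) (f^[k] y) < ε) :
    c ^ k * dist x y ≤ dist (f^[k] x) (f^[k] y) := by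
  induction k generalizing x y with
  | zero => simp
  | succ k ih =>
    rw [iterate_succ_apply, iterate_succ_apply] at hxy ⊢
    have hk := ih (hmaps hx) (hmaps hy) hxy
    have hfxy : dist (f x) (f y) < ε :=
      ((le_mul_of_one_le_left dist_nonneg (one_le_pow₀ hc)).trans hk).trans_lt hxy
    calc c ^ (k + 1) * dist x y = c ^ k * (c * dist x y) := by ring
      _ ≤ c ^ k * dist (f x) (f y) := by gcongr; exact hback x hx y hy hfxy
      _ ≤ _ := hk

theorem exists_card_forall_exists_dist_lt {X : Type*} [PseudoMetricSpace X] {K : Set X}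
    (hK : TotallyBounded K) {ε : ℝ} (hε : 0 < ε) :
    ∃ N : ℕ, ∀ F : Finset X, N < F.card → ∀ g : X → X, MapsTo g F K →
      ∃ x ∈ F, ∃ y ∈ F, x ≠ y ∧ dist (g x) (g y) < ε := by
  obtain ⟨T, hT, hcover⟩ := Metric.totallyBounded_iff.1 hK (ε / 2) (half_pos hε)
  refine ⟨hT.toFinset.card, fun F hF g hg => ?_⟩
  have hcenter : ∀ x ∈ F, ∃ t ∈ T, dist (g x) t < ε / 2 := fun x hx => by
    simpa only [mem_iUnion, Metric.mem_ball, exists_prop] using hcover (hg hx)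
  choose! center hmem hclose using hcenter
  obtain ⟨x, hx, y, hy, hne, heq⟩ := Finset.exists_ne_map_eq_of_card_lt_of_maps_to hF
    (f := center) fun x hx => hT.mem_toFinset.2 (hmem x hx)
  refine ⟨x, hx, y, hy, hne, ?_⟩
  calc dist (g x) (g y) ≤ dist (g x) (center x) + dist (g y) (center x) :=
        dist_triangle_right _ _ _
    _ < ε / 2 + ε / 2 := add_lt_add (hclose x hx) (heq ▸ hclose y hy)
    _ = ε := add_halves ε

theorem ExpandsBelow.finite_of_injOn {X : Type*} [MetricSpace X] {f : X → X} {c δ : ℝ}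
    {K : Set X} (hf : ExpandsBelow f c δ) (hc : 1 < c) (hδ : 0 < δ) (hK : IsCompact K)
    (hcont : ContinuousOn f K) (hmaps : MapsTo f K K) (hinj : InjOn f K) : K.Finite := by
  by_contra hinf
  obtain ⟨ε, hε, hback⟩ := hf.exists_forall_dist_lt_imp hK hcont hinj hδ
  obtain ⟨N, hN⟩ := exists_card_forall_exists_dist_lt hK.totallyBounded hε
  obtain ⟨F, hFK, hcard⟩ := Set.Infinite.exists_subset_card_eq hinf (N + 1)
  have hpair (k : ℕ) : ∃ x ∈ F, ∃ y ∈ F, x ≠ y ∧ c ^ k * dist x y < ε := by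
    obtain ⟨x, hx, y, hy, hne, hlt⟩ :=
      hN F (by omega) f^[k] ((hmaps.iterate k).mono_left hFK)
    exact ⟨x, hx, y, hy, hne, (pow_mul_dist_le_dist_iterate hc.le hmaps hback k
      (hFK hx) (hFK hy) hlt).trans_lt hlt⟩
  have hsep : 0 < (F : Set X).infsep := by
    obtain ⟨x, hx, y, hy, hne, -⟩ := hpair 0
    exact F.finite_toSet.infsep_pos_iff_nontrivial.2 ⟨x, hx, y, hy, hne⟩
  obtain ⟨k, hk⟩ := pow_unbounded_of_one_lt (ε / (F : Set X).infsep) hc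
  obtain ⟨x, hx, y, hy, hne, hlt⟩ := hpair k
  have hle : c ^ k * (F : Set X).infsep ≤ c ^ k * dist x y := by
    gcongr
    exact infsep_le_dist_of_mem hx hy hne
  exact (((div_lt_iff₀ hsep).1 hk).trans_le hle).not_gt hlt

theorem exists_tendsto_iterate_of_monotoneOn {α : Type*} [ConditionallyCompleteLinearOrder α]
    [TopologicalSpace α] [OrderTopology α] {E : Set α} {g : α → α} (hmaps : MapsTo g E E)
    (hmono : MonotoneOn g E) (hbelow : BddBelow E) (habove : BddAbove E) {u : α} (hu : u ∈ E) :
    ∃ l, Tendsto (fun n => g^[n] u) atTop (𝓝 l) := by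
  have hrange : range (fun n => g^[n] u) ⊆ E := range_subset_iff.2 fun n => hmaps.iterate n hu
  have hrestrict : Monotone (hmaps.restrict g E E) := fun a b hab => hmono a.2 b.2 hab
  have hcoe (n : ℕ) : ((hmaps.restrict g E E)^[n] ⟨u, hu⟩ : α) = g^[n] u :=
    hmaps.coe_iterate_restrict ⟨u, hu⟩ n
  rcases le_total u (g u) with h | h
  · have hm : Monotone fun n => g^[n] u := fun a b hab => by
      simpa only [← hcoe, Subtype.coe_le_coe] using
        hrestrict.monotone_iterate_of_le_map (x := ⟨u, hu⟩) h hab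
    exact ⟨_, tendsto_atTop_ciSup hm (habove.mono hrange)⟩
  · have hm : Antitone fun n => g^[n] u := fun a b hab => by
      simpa only [← hcoe, Subtype.coe_le_coe] using
        hrestrict.antitone_iterate_of_map_le (x := ⟨u, hu⟩) h hab
    exact ⟨_, tendsto_atTop_ciInf hm (hbelow.mono hrange)⟩

/-- Take the least `j` such that `P (j + 1)` is related to `P m`. Were `S j` related to `P m`, then
by induction so would be `P j`, against minimality. -/
theorem rel_of_forall_not_crossing {α : Type*} {r : α → α → Prop}
    (htrans : ∀ a b c, r a b → r b c → r a c) {P S : ℕ → α} {n : ℕ}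
    (hP : ∀ m, 1 ≤ m → m ≤ n → r (P m) (P m)) (hS : ∀ a, ¬ r (S 0) a)
    (hcross : ∀ j m, r (P (j + 1)) (P m) → r (S j) (P m) ∨ r (P m) (S m)) :
    ∀ m, 1 ≤ m → m ≤ n → r (P m) (S m) := by
  classical
  intro m
  induction m using Nat.strong_induction_on with
  | _ m ih =>
    intro hm hmn
    have hex : ∃ j, j < m ∧ r (P (j + 1)) (P m) :=
      ⟨m - 1, by omega, by rw [Nat.sub_add_cancel hm]; exact hP m hm hmn⟩
    obtain ⟨j, ⟨hj, hjm⟩, hmin⟩ := Nat.findX hex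
    refine (hcross j m hjm).resolve_left fun hSm => ?_
    cases j with
    | zero => exact hS _ hSm
    | succ i =>
      have hPS : r (P (i + 1)) (S (i + 1)) := ih (i + 1) hj (by omega) (by omega)
      exact hmin i (by omega) ⟨by omega, htrans _ _ _ hPS hSm⟩

/-! ### Multiplication on the circle -/

instance : LocallyConnectedSpace Circle1 :=
  (isQuotientMap_quotient_mk' (X := ℝ)).locallyConnectedSpace

theorem mem_ratC_iff_isOfFinAddOrder {x : Circle1} : x ∈ ratC ↔ IsOfFinAddOrder x := by
  constructor
  · rintro ⟨q, rfl⟩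
    exact AddCircle.isOfFinAddOrder_iff_exists_rat_eq_div.2 ⟨q, (div_one _).symm⟩
  · obtain ⟨t, rfl⟩ := QuotientAddGroup.mk_surjective x
    intro ht
    obtain ⟨q, hq⟩ := AddCircle.isOfFinAddOrder_iff_exists_rat_eq_div.1 ht
    exact ⟨q, by rw [hq, div_one]⟩

theorem md_mem_ratC_iff {D : ℕ} (hD : D ≠ 0) {x : Circle1} : md D x ∈ ratC ↔ x ∈ ratC := by
  simp only [mem_ratC_iff_isOfFinAddOrder, md, isOfFinAddOrder_nsmul, hD, or_false]

theorem mem_ratC_of_md_eq_self {D : ℕ} (hD : 2 ≤ D) {x : Circle1} (hx : md D x = x) :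
    x ∈ ratC := by
  have hzero : (D - 1) • x = 0 := by
    rw [sub_nsmul x (by omega : 1 ≤ D), one_nsmul, ← sub_eq_add_neg]
    exact sub_eq_zero.2 hx
  exact mem_ratC_iff_isOfFinAddOrder.2
    (isOfFinAddOrder_iff_nsmul_eq_zero.2 ⟨D - 1, by omega, hzero⟩)

theorem md_coe (D : ℕ) (t : ℝ) : md D (t : Circle1) = ((D * t : ℝ) : Circle1) := by
  rw [md, ← AddCircle.coe_nsmul, nsmul_eq_mul]

theorem coe_add_intCast (t : ℝ) (n : ℤ) : ((t + n : ℝ) : Circle1) = t := by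
  simpa only [zsmul_eq_mul, mul_one] using QuotientAddGroup.mk_add_of_mem t
    (AddSubgroup.zsmul_mem_zmultiples (1 : ℝ) n)

theorem md_coe_add_div {D : ℕ} (hD : D ≠ 0) (t : ℝ) (m : ℕ) :
    md D ((t + m / D : ℝ) : Circle1) = md D t := by
  rw [md_coe, md_coe, mul_add, mul_div_cancel₀ _ (Nat.cast_ne_zero.2 hD)]
  exact_mod_cast coe_add_intCast _ m

theorem continuous_md (D : ℕ) : Continuous (md D) :=
  continuous_nsmul D

theorem iterate_md (D k : ℕ) : (md D)^[k] = md (D ^ k) :=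
  smul_iterate D k

theorem exists_iterate_md_isPeriodicPt {D : ℕ} {x : Circle1} (hx : x ∈ ratC) :
    ∃ a k, 0 < k ∧ IsPeriodicPt (md D) k ((md D)^[a] x) := by
  have hfin := finite_multiples.2 (mem_ratC_iff_isOfFinAddOrder.1 hx)
  have horbit (n : ℕ) : (md D)^[n] x ∈ AddSubmonoid.multiples x :=
    ⟨D ^ n, by rw [iterate_md, md]⟩
  obtain ⟨a, b, hab, heq⟩ := hfin.exists_lt_map_eq_of_forall_mem horbit
  refine ⟨a, b - a, by omega, ?_⟩
  rw [IsPeriodicPt, IsFixedPt, ← iterate_add_apply, Nat.sub_add_cancel hab.le, heq]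

theorem finite_preimage_md {D : ℕ} (hD : 0 < D) (y : Circle1) : (md D ⁻¹' {y}).Finite := by
  rcases (md D ⁻¹' {y}).eq_empty_or_nonempty with hempty | ⟨x, rfl⟩
  · exact hempty ▸ finite_empty
  refine ((AddCircle.finite_torsion (1 : ℝ) hD).image (· + x)).subset fun w hw => ?_
  refine ⟨w - x, ?_, sub_add_cancel w x⟩
  rw [mem_ofPred_eq, nsmul_sub]
  exact sub_eq_zero.2 hw

theorem expandsBelow_md {D : ℕ} (hD : 0 < D) : ExpandsBelow (md D) D (1 / (2 * D)) := by
  intro x y hxy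
  obtain ⟨t, ht⟩ := QuotientAddGroup.mk_surjective (x - y)
  set u : ℝ := t - round t
  have hu : (u : Circle1) = x - y := by
    rw [← ht, ← coe_add_intCast u (round t), sub_add_cancel]
  have hnorm : dist x y = |u| := by
    rw [dist_eq_norm, ← ht]; exact UnitAddCircle.norm_eq
  have hsmall : |D * u| ≤ |(1 : ℝ)| / 2 := by
    rw [hnorm, lt_div_iff₀ (by positivity)] at hxy
    rw [abs_mul, Nat.abs_cast, abs_one]
    linarith
  have hmd : md D x - md D y = ((D * u : ℝ) : Circle1) := by
    rw [← md_coe, hu, md, md, md, nsmul_sub]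
  rw [dist_eq_norm (md D x), hmd, (AddCircle.norm_coe_eq_abs_iff 1 one_ne_zero).2 hsmall, hnorm,
    abs_mul, Nat.abs_cast]

/-! ### Connected subsets of the circle -/

theorem mem_or_mem_of_isPreconnected {C : Set Circle1} (hC : IsPreconnected C) {s p t q : ℝ}
    (hsp : s < p) (hpt : p < t) (htq : t < q) (hqs : q < s + 1)
    (hs : (s : Circle1) ∈ C) (ht : (t : Circle1) ∈ C) :
    (p : Circle1) ∈ C ∨ (q : Circle1) ∈ C := by
  refine or_iff_not_imp_left.2 fun hp => ?_
  let e := AddCircle.openPartialHomeomorphCoe (1 : ℝ) p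
  have hCp : C ⊆ e.target := fun x hx hxp => hp (hxp ▸ hx)
  have hlift {u : ℝ} (hpu : p < u) (hu : u < p + 1) : e.symm (u : Circle1) = u :=
    e.left_inv ⟨hpu, hu⟩
  have hord := (hC.image e.symm (e.continuousOn_symm.mono hCp)).ordConnected
  have hs' : ((s + 1 : ℝ) : Circle1) ∈ C := by rwa [AddCircle.coe_add_period]
  obtain ⟨x, hx, hxq⟩ := hord.out (mem_image_of_mem _ ht) (mem_image_of_mem _ hs')
    (show q ∈ _ by
      rw [hlift hpt (by linarith), hlift (by linarith) (by linarith)]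
      exact ⟨htq.le, hqs.le⟩)
  have : (q : Circle1) = x := by rw [← hxq]; exact e.right_inv (hCp hx)
  exact this ▸ hx

theorem exists_mem_uIoo_of_mem_of_notMem {A : Set Circle1} {θ : Circle1} {u v : ℝ}
    (hu : (u : Circle1) ∈ connectedComponentIn Aᶜ θ)
    (hv : (v : Circle1) ∉ connectedComponentIn Aᶜ θ) (hvA : (v : Circle1) ∉ A) :
    ∃ q ∈ uIoo u v, (q : Circle1) ∈ A := by
  by_contra! hA
  have hconn : IsPreconnected (((↑) : ℝ → Circle1) '' uIcc u v) :=
    isPreconnected_uIcc.image _ (AddCircle.continuous_mk' 1).continuousOn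
  have hsub : ((↑) : ℝ → Circle1) '' uIcc u v ⊆ Aᶜ := by
    rintro _ ⟨q, hq, rfl⟩ hqA
    have hqu : q ≠ u := by rintro rfl; exact connectedComponentIn_subset _ _ hu hqA
    have hqv : q ≠ v := by rintro rfl; exact hvA hqA
    refine hA q ⟨hq.1.lt_of_ne ?_, hq.2.lt_of_ne ?_⟩ hqA <;> grind
  rw [connectedComponentIn_eq hu] at hv
  exact hv (hconn.subset_connectedComponentIn (mem_image_of_mem _ left_mem_uIcc) hsub
    (mem_image_of_mem _ right_mem_uIcc))

theorem closure_connectedComponentIn_compl_subset {X : Type*} [TopologicalSpace X]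
    [LocallyConnectedSpace X] {A : Set X} (hA : IsClosed A) (θ : X) :
    closure (connectedComponentIn Aᶜ θ) ⊆ connectedComponentIn Aᶜ θ ∪ A := by
  intro y hy
  refine or_iff_not_imp_right.2 fun hyA => ?_
  obtain ⟨w, hwy, hwθ⟩ := mem_closure_iff.1 hy _ hA.isOpen_compl.connectedComponentIn
    (mem_connectedComponentIn hyA)
  rw [connectedComponentIn_eq hwθ, ← connectedComponentIn_eq hwy]
  exact mem_connectedComponentIn hyA

theorem Unlinked.component_subset_or_subset {A B : Set Circle1} (h : Unlinked A B) {θ : Circle1}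
    (hθ : θ ∉ A) :
    connectedComponentIn Aᶜ θ ⊆ connectedComponentIn Bᶜ θ ∨ B ⊆ connectedComponentIn Aᶜ θ := by
  by_cases hdisj : Disjoint (connectedComponentIn Aᶜ θ) B
  · exact .inl (isPreconnected_connectedComponentIn.subset_connectedComponentIn
      (mem_connectedComponentIn hθ) hdisj.subset_compl_right)
  · obtain ⟨w, hwA, hwB⟩ := not_disjoint_iff.1 hdisj
    obtain ⟨c, -, hBc⟩ := h
    right
    rwa [connectedComponentIn_eq hwA, ← connectedComponentIn_eq (hBc hwB)]

theorem component_subset_or_subset_or_union_eq_univ {A B : Set Circle1} (hA : IsClosed A)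
    (hB : IsClosed B) (hAB : Unlinked A B) (hBA : Unlinked B A) {θ : Circle1} (hθA : θ ∉ A)
    (hθB : θ ∉ B) :
    connectedComponentIn Aᶜ θ ⊆ connectedComponentIn Bᶜ θ ∨
      connectedComponentIn Bᶜ θ ⊆ connectedComponentIn Aᶜ θ ∨
      connectedComponentIn Aᶜ θ ∪ connectedComponentIn Bᶜ θ = univ := by
  refine or_iff_not_imp_left.2 fun hnAB => or_iff_not_imp_left.2 fun hnBA => ?_
  have hBsub := (hAB.component_subset_or_subset hθA).resolve_left hnAB
  have hAsub := (hBA.component_subset_or_subset hθB).resolve_left hnBA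
  have hclopen : IsClopen (connectedComponentIn Aᶜ θ ∪ connectedComponentIn Bᶜ θ) := by
    refine ⟨isClosed_of_closure_subset ?_,
      hA.isOpen_compl.connectedComponentIn.union hB.isOpen_compl.connectedComponentIn⟩
    have hclA := closure_connectedComponentIn_compl_subset hA θ
    have hclB := closure_connectedComponentIn_compl_subset hB θ
    rw [closure_union]
    grind
  exact hclopen.eq_univ ⟨θ, .inl (mem_connectedComponentIn hθA)⟩

/-! ### Preservation of the cyclic order -/

theorem semiconj_coe_add_fract_md {D : ℕ} {z : ℝ} (hfix : md D z = z) :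
    Semiconj (fun u : ℝ => ((z + u : ℝ) : Circle1)) (fun u => Int.fract (D * u)) (md D) := by
  intro u
  beta_reduce
  rw [AddCircle.coe_add, AddCircle.coe_fract, md_coe, mul_add, AddCircle.coe_add, ← md_coe D z,
    hfix]

/-- `m_D` preserves the cyclic order on `L`: seen from any `p ∈ L`, the positions of the images
`m_D(y)` relative to `m_D(p)` increase weakly as `y ∈ L` turns once around the circle. Points of the
circle are represented by real lifts. -/
def PreservesCyclicOrderOn (D : ℕ) (L : Set Circle1) : Prop :=
  ∀ p s t : ℝ, ↑p ∈ L → ↑s ∈ L → ↑t ∈ L → p < s → s ≤ t → t < p + 1 →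
    Int.fract (D * (s - p)) ≤ Int.fract (D * (t - p))

namespace PreservesCyclicOrderOn

variable {D : ℕ} {L : Set Circle1}

theorem fract_le_fract_of_mem_closure (h : PreservesCyclicOrderOn D L) {z s t : ℝ}
    (hz : ↑z ∈ closure L) (hs : ↑s ∈ L) (ht : ↑t ∈ L) (hzs : z < s) (hst : s ≤ t)
    (htz : t < z + 1) (hs0 : Int.fract (D * (s - z)) ≠ 0) (ht0 : Int.fract (D * (t - z)) ≠ 0) :
    Int.fract (D * (s - z)) ≤ Int.fract (D * (t - z)) := by
  have hfreq : ∃ᶠ p : ℝ in 𝓝 z, ↑p ∈ L := by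
    rw [mem_closure_iff_frequently] at hz
    rwa [← frequently_map (m := ((↑) : ℝ → Circle1)), ← QuotientAddGroup.nhds_eq]
  have hlim {u : ℝ} (hu : Int.fract (D * (u - z)) ≠ 0) :
      Tendsto (fun p : ℝ => Int.fract (D * (u - p))) (𝓝 z) (𝓝 (Int.fract (D * (u - z)))) :=
    ContinuousAt.comp (g := Int.fract) (f := fun p : ℝ => D * (u - p))
      (continuousAt_fract fun hint => hu (by rw [Int.fract, ← hint, sub_self])) (by fun_prop)
  have hnear : ∀ᶠ p : ℝ in 𝓝 z, p < s ∧ t < p + 1 :=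
    (eventually_lt_nhds hzs).and
      ((continuous_add_const 1).continuousAt.eventually_const_lt htz)
  exact le_of_tendsto_of_tendsto_of_frequently (hlim hs0) (hlim ht0)
    ((hfreq.and_eventually hnear).mono fun p hp => h p s t hp.1 hs ht hp.2.1 hst hp.2.2)

/-- Seen from a fixed point, `m_D` acts on `L` as a monotone interval map, whose orbits converge. -/
theorem md_ne_self (h : PreservesCyclicOrderOn D L) (hD : 2 ≤ D) (hmaps : MapsTo (md D) L L)
    (hQ : Disjoint L ratC) (hne : L.Nonempty) {z : Circle1} (hz : z ∈ closure L) (hzQ : z ∈ ratC) :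
    md D z ≠ z := by
  intro hfix
  obtain ⟨z, rfl⟩ := QuotientAddGroup.mk_surjective z
  let g : ℝ → ℝ := fun u => Int.fract (D * u)
  let E : Set ℝ := {u | u ∈ Ioo 0 1 ∧ ((z + u : ℝ) : Circle1) ∈ L}
  have hfractE {v : ℝ} (hv : ((z + Int.fract v : ℝ) : Circle1) ∈ L) : Int.fract v ∈ E := by
    refine ⟨⟨(Int.fract_nonneg v).lt_of_ne fun h0 => ?_, Int.fract_lt_one v⟩, hv⟩
    rw [← h0, add_zero] at hv
    exact disjoint_left.1 hQ hv hzQ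
  have hsemi := semiconj_coe_add_fract_md hfix
  have hgE : MapsTo g E E := fun u hu => hfractE (mem_of_eq_of_mem (hsemi u) (hmaps hu.2))
  have hmono : MonotoneOn g E := fun u hu v hv huv => by
    simpa only [add_sub_cancel_left] using h.fract_le_fract_of_mem_closure hz hu.2 hv.2
      (by linarith [hu.1.1]) (by linarith) (by linarith [hv.1.2])
      (by rw [add_sub_cancel_left]; exact (hgE hu).1.1.ne')
      (by rw [add_sub_cancel_left]; exact (hgE hv).1.1.ne')
  obtain ⟨t, ht⟩ := hne.preimage QuotientAddGroup.mk_surjective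
  have htE : Int.fract (t - z) ∈ E := hfractE <| by
    rwa [AddCircle.coe_add, AddCircle.coe_fract, ← AddCircle.coe_add, add_sub_cancel]
  obtain ⟨l, hl⟩ := exists_tendsto_iterate_of_monotoneOn hgE hmono
    ⟨0, fun u hu => hu.1.1.le⟩ ⟨1, fun u hu => hu.1.2.le⟩ htE
  have hconv : Tendsto (fun n => (md D)^[n] ((z + Int.fract (t - z) : ℝ) : Circle1)) atTop
      (𝓝 ((z + l : ℝ) : Circle1)) := by
    exact (((AddCircle.continuous_mk' 1).comp (continuous_const_add z)).tendsto l).comp hl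
      |>.congr fun n => hsemi.iterate_right n _
  obtain ⟨n, hn⟩ := (expandsBelow_md (by omega : 0 < D)).exists_iterate_succ_eq_of_tendsto
    (by exact_mod_cast hD) (by positivity) hconv
  rw [iterate_succ_apply'] at hn
  exact disjoint_left.1 hQ (hmaps.iterate n htE.2) (mem_ratC_of_md_eq_self hD hn)

end PreservesCyclicOrderOn

/-! ### Gaps of an unlinked class -/

namespace RatLam

variable {lam : RatLam} {θ : Circle1} {D : ℕ}

theorem isClosed_relClass (lam : RatLam) (x : Circle1) : IsClosed (relClass lam.rel x) :=
  (lam.finiteClass x).isClosed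

theorem relClass_subset_ratC (lam : RatLam) (x : Circle1) : relClass lam.rel x ⊆ ratC :=
  fun _ hy => (lam.rel_rat _ _ hy).2

theorem relClass_eq_empty (lam : RatLam) {x : Circle1} (hx : x ∉ ratC) :
    relClass lam.rel x = ∅ :=
  eq_empty_of_forall_notMem fun _ hy => hx (lam.rel_rat _ _ hy).1

theorem relClass_eq_of_rel {x y : Circle1} (h : lam.rel x y) :
    relClass lam.rel x = relClass lam.rel y :=
  ext fun _ => ⟨lam.trans _ _ _ (lam.symm _ _ h), lam.trans _ _ _ h⟩

/-- The component containing `θ` of the complement of the `λ`-class of `x`. An irrational `x` has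
empty class, and then the side is the whole circle. -/
def side (lam : RatLam) (θ x : Circle1) : Set Circle1 :=
  connectedComponentIn (relClass lam.rel x)ᶜ θ

/-- The `λ`-unlinked class of `θ`, as the set of irrational angles lying on the same side as `θ` of
every `λ`-class. -/
def unlClass (lam : RatLam) (θ : Circle1) : Set Circle1 :=
  {y | y ∉ ratC ∧ ∀ x, y ∈ lam.side θ x}

/-- A single `λ`-class separates both `y` and `z` from `θ`, so that `y` and `z` lie in the same gap
of the unlinked class of `θ`. -/
def InCommonGap (lam : RatLam) (θ y z : Circle1) : Prop :=
  ∃ x, y ∉ lam.side θ x ∧ z ∉ lam.side θ x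

/-- Forward invariance of `λ`: `m_D` maps related angles to related angles, with no condition on the
components of the complements of the classes. -/
def ForwardInvariant (lam : RatLam) (D : ℕ) : Prop :=
  ∀ x y, lam.rel x y → lam.rel (md D x) (md D y)

theorem ForwardInvariant.pow (h : lam.ForwardInvariant D) (k : ℕ) :
    lam.ForwardInvariant (D ^ k) := by
  intro x y hxy
  rw [← iterate_md]
  induction k with
  | zero => exact hxy
  | succ k ih =>
    rw [iterate_succ_apply', iterate_succ_apply']
    exact h _ _ ih

theorem isPreconnected_side (lam : RatLam) (θ x : Circle1) : IsPreconnected (lam.side θ x) :=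
  isPreconnected_connectedComponentIn

theorem self_mem_side (hθ : θ ∉ ratC) (x : Circle1) : θ ∈ lam.side θ x :=
  mem_connectedComponentIn fun h => hθ (lam.relClass_subset_ratC x h)

theorem notMem_side_of_rel {x y : Circle1} (h : lam.rel x y) : y ∉ lam.side θ x :=
  fun hy => connectedComponentIn_subset _ _ hy h

theorem side_eq_univ {x : Circle1} (hx : x ∉ ratC) : lam.side θ x = univ := by
  rw [side, lam.relClass_eq_empty hx, compl_empty, connectedComponentIn_univ,
    PreconnectedSpace.connectedComponent_eq_univ]

theorem side_subset_or_subset (hθ : θ ∉ ratC) {x x' y : Circle1} (hx : y ∉ lam.side θ x)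
    (hx' : y ∉ lam.side θ x') :
    lam.side θ x ⊆ lam.side θ x' ∨ lam.side θ x' ⊆ lam.side θ x := by
  by_cases hrel : lam.rel x x'
  · exact .inl (by rw [side, side, relClass_eq_of_rel hrel])
  rcases component_subset_or_subset_or_union_eq_univ (lam.isClosed_relClass x)
    (lam.isClosed_relClass x') (lam.unlinkedClass _ _ hrel)
    (lam.unlinkedClass _ _ fun h => hrel (lam.symm _ _ h))
    (fun h => hθ (lam.relClass_subset_ratC x h)) (fun h => hθ (lam.relClass_subset_ratC x' h))
    with h | h | h
  · exact .inl h
  · exact .inr h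
  · exact ((h.symm ▸ mem_univ y : y ∈ lam.side θ x ∪ lam.side θ x').elim hx hx').elim

theorem InCommonGap.trans (hθ : θ ∉ ratC) {a b c : Circle1} (hab : lam.InCommonGap θ a b)
    (hbc : lam.InCommonGap θ b c) : lam.InCommonGap θ a c := by
  obtain ⟨x, ha, hb⟩ := hab
  obtain ⟨x', hb', hc⟩ := hbc
  rcases side_subset_or_subset hθ hb hb' with h | h
  · exact ⟨x, ha, fun hcx => hc (h hcx)⟩
  · exact ⟨x', fun hax => ha (h hax), hc⟩

theorem exists_eq_unlClass {L : Set Circle1} (hL : IsUnlClass lam.rel L) :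
    ∃ θ ∉ ratC, L = lam.unlClass θ := by
  obtain ⟨θ, hθ, rfl⟩ := hL
  refine ⟨θ, hθ, ext fun y => ⟨?_, fun hy => ⟨hθ, hy.1, .inr fun x _ => hy.2 x⟩⟩⟩
  rintro ⟨-, hy, rfl | hside⟩
  · exact ⟨hy, self_mem_side hθ⟩
  · refine ⟨hy, fun x => ?_⟩
    by_cases hx : x ∈ ratC
    · exact hside x hx
    · rw [side_eq_univ hx]; trivial

theorem closure_unlClass_subset (lam : RatLam) (θ : Circle1) :
    closure (lam.unlClass θ) ⊆ lam.unlClass θ ∪ ratC := by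
  intro y hy
  refine or_iff_not_imp_right.2 fun hyQ => ⟨hyQ, fun x => ?_⟩
  have hyside : y ∈ closure (lam.side θ x) := closure_mono (fun w hw => hw.2 x) hy
  exact (closure_connectedComponentIn_compl_subset (lam.isClosed_relClass x) θ hyside).resolve_right
    fun h => hyQ (lam.relClass_subset_ratC x h)

theorem inCommonGap_self_of_notMem {y : Circle1} (hy : y ∉ ratC) (hL : y ∉ lam.unlClass θ) :
    lam.InCommonGap θ y y := by
  obtain ⟨x, hx⟩ := not_forall.1 fun h => hL ⟨hy, h⟩
  exact ⟨x, hx, hx⟩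

theorem not_inCommonGap_of_mem {y : Circle1} (hy : y ∈ lam.unlClass θ) (z : Circle1) :
    ¬ lam.InCommonGap θ y z :=
  fun ⟨x, hx, _⟩ => hx (hy.2 x)

/-- The class of `x` meets both `(b, a)` and `(a', b')`, so its image separates `D b` from `D a`. -/
theorem not_mem_side_and_mem_side_of_crossing (hD : 0 < D) (hrel : lam.ForwardInvariant D)
    {x : Circle1} {a b a' b' : ℝ} {k : ℤ} (hba : b < a) (hab' : a' < b')
    (haa' : D * a' = D * a + k) (hbb' : D * b' = D * b + k + 1) (haQ : (a : Circle1) ∉ ratC)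
    (ha : ↑a ∉ lam.side θ x) (hb : ↑b ∈ lam.side θ x)
    (ha' : ↑a' ∉ lam.side θ x) (hb' : ↑b' ∈ lam.side θ x) :
    ¬ (md D a ∈ lam.side θ (md D x) ∧ md D b ∈ lam.side θ (md D x)) := by
  rintro ⟨hDa, hDb⟩
  have hDpos : (0 : ℝ) < D := Nat.cast_pos.2 hD
  have hmd : md D a' = md D a := by rw [md_coe, md_coe, haa', coe_add_intCast]
  have ha'Q : (a' : Circle1) ∉ ratC := by
    rwa [← md_mem_ratC_iff hD.ne', hmd, md_mem_ratC_iff hD.ne']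
  obtain ⟨q, hq, hqx⟩ := exists_mem_uIoo_of_mem_of_notMem hb ha
    fun h => haQ (lam.relClass_subset_ratC x h)
  obtain ⟨r, hr, hrx⟩ := exists_mem_uIoo_of_mem_of_notMem hb' ha'
    fun h => ha'Q (lam.relClass_subset_ratC x h)
  rw [uIoo_of_lt hba] at hq
  rw [uIoo_of_gt hab'] at hr
  have hDq : ((D * q : ℝ) : Circle1) ∉ lam.side θ (md D x) := by
    rw [← md_coe]; exact notMem_side_of_rel (hrel _ _ hqx)
  have hDr : ((D * r - k : ℝ) : Circle1) ∉ lam.side θ (md D x) := by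
    rw [← coe_add_intCast _ k, sub_add_cancel, ← md_coe]
    exact notMem_side_of_rel (hrel _ _ hrx)
  rw [md_coe] at hDa hDb
  refine (mem_or_mem_of_isPreconnected (lam.isPreconnected_side θ _)
    (s := D * b) (t := D * a) (mul_lt_mul_of_pos_left hq.1 hDpos)
    (mul_lt_mul_of_pos_left hq.2 hDpos) ?_ ?_ hDb hDa).elim hDq hDr
  · linarith [mul_lt_mul_of_pos_left hr.1 hDpos]
  · linarith [mul_lt_mul_of_pos_left hr.2 hDpos]

theorem inCommonGap_add_div (hD : 0 < D) (hrel : lam.ForwardInvariant D) (hθ : θ ∉ ratC)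
    {p s : ℝ} (hps : p < s) (hsp : s < p + 1 / D) (hs : ↑s ∈ lam.unlClass θ)
    (hDp : md D p ∈ lam.unlClass θ) (hDs : md D s ∈ lam.unlClass θ) {n : ℕ} (hn : 1 ≤ n)
    (hP : ∀ m : ℕ, 1 ≤ m → m ≤ n → ((p + m / D : ℝ) : Circle1) ∉ lam.unlClass θ) :
    lam.InCommonGap θ (p + n / D : ℝ) (s + n / D : ℝ) := by
  have hDne : (D : ℝ) ≠ 0 := Nat.cast_ne_zero.2 hD.ne'
  have hmd := md_coe_add_div hD.ne'
  have hPQ (m : ℕ) : ((p + m / D : ℝ) : Circle1) ∉ ratC := fun h =>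
    hDp.1 (hmd p m ▸ (md_mem_ratC_iff hD.ne').2 h)
  refine rel_of_forall_not_crossing (r := lam.InCommonGap θ)
    (P := fun m => ((p + m / D : ℝ) : Circle1)) (S := fun m => ((s + m / D : ℝ) : Circle1))
    (fun _ _ _ => InCommonGap.trans hθ)
    (fun m hm hmn => inCommonGap_self_of_notMem (hPQ m) (hP m hm hmn))
    (fun a => not_inCommonGap_of_mem (by simpa using hs) a) ?_ n hn le_rfl
  rintro j m ⟨x, hPj, hPm⟩
  by_contra! hcon
  have hSj : ((s + j / D : ℝ) : Circle1) ∈ lam.side θ x := by_contra fun h => hcon.1 ⟨x, h, hPm⟩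
  have hSm : ((s + m / D : ℝ) : Circle1) ∈ lam.side θ x := by_contra fun h => hcon.2 ⟨x, hPm, h⟩
  refine not_mem_side_and_mem_side_of_crossing (k := m - (j + 1)) hD hrel ?_ ?_ ?_ ?_ (hPQ _)
    hPj hSj hPm hSm ⟨?_, ?_⟩
  · push_cast
    rw [add_div]
    linarith
  · linarith
  · push_cast
    field_simp
    ring
  · push_cast
    field_simp
    ring
  · rw [hmd]; exact hDp.2 _
  · rw [hmd]; exact hDs.2 _

/-- By injectivity the preimages `p + (i + m) / D` of `m_D(p)` are not in the class, so they are
matched with the preimages `s + m / D` of `m_D(s)`; if `t < s + n / D`, the last pair would lie in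
one gap yet have `t` between its points. -/
theorem add_div_le_of_add_div_le (hD : 0 < D) (hrel : lam.ForwardInvariant D) (hθ : θ ∉ ratC)
    (hmaps : MapsTo (md D) (lam.unlClass θ) (lam.unlClass θ))
    (hinj : InjOn (md D) (lam.unlClass θ)) {p s t : ℝ} (hp : ↑p ∈ lam.unlClass θ)
    (hs : ↑s ∈ lam.unlClass θ) (ht : ↑t ∈ lam.unlClass θ) (htp : t < p + 1) {i n : ℕ}
    (hn : 1 ≤ n) (his : p + i / D < s) (hsi : s < p + i / D + 1 / D)
    (hnt : p + i / D + n / D ≤ t) : s + n / D ≤ t := by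
  by_contra! htn
  have hn' : (1 : ℝ) / D ≤ n / D := by gcongr; exact_mod_cast hn
  have hi : (0 : ℝ) ≤ i / D := by positivity
  have hDpi := md_coe_add_div hD.ne' p i
  have hP (m : ℕ) (hm : 1 ≤ m) (hmn : m ≤ n) :
      ((p + i / D + m / D : ℝ) : Circle1) ∉ lam.unlClass θ := fun hmem => by
    have hm0 : (0 : ℝ) < m / D := by positivity
    have hmn' : (m : ℝ) / D ≤ n / D := by gcongr
    have heq : ((p + i / D + m / D : ℝ) : Circle1) = p := hinj hmem hp <|
      (md_coe_add_div hD.ne' _ m).trans hDpi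
    have := (AddCircle.coe_eq_coe_iff_of_mem_Ico (a := p) ⟨by linarith, by linarith⟩
      ⟨le_rfl, by linarith⟩).1 heq
    linarith
  obtain ⟨x, hPx, hSx⟩ := inCommonGap_add_div hD hrel hθ his hsi hs (hDpi ▸ hmaps hp)
    (hmaps hs) hn hP
  have hne : p + i / D + n / D ≠ t := fun h => hPx (h ▸ ht.2 x)
  exact (mem_or_mem_of_isPreconnected (lam.isPreconnected_side θ x) (by linarith)
    (hnt.lt_of_ne hne) htn (by linarith) (hs.2 x) (ht.2 x)).elim hPx hSx

theorem preservesCyclicOrderOn_unlClass (hD : 0 < D) (hrel : lam.ForwardInvariant D)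
    (hθ : θ ∉ ratC) (hmaps : MapsTo (md D) (lam.unlClass θ) (lam.unlClass θ))
    (hinj : InjOn (md D) (lam.unlClass θ)) : PreservesCyclicOrderOn D (lam.unlClass θ) := by
  intro p s t hp hs ht hps hst htp
  by_contra! hlt
  have hDpos : (0 : ℝ) < D := Nat.cast_pos.2 hD
  have hle : (D : ℝ) * (s - p) ≤ D * (t - p) := by gcongr
  have hfs := Int.self_sub_floor (D * (s - p))
  have hft := Int.self_sub_floor (D * (t - p))
  have hft0 := Int.fract_nonneg (D * (t - p))
  have hfs1 := Int.fract_lt_one (D * (s - p))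
  obtain ⟨i, hi⟩ := Int.eq_ofNat_of_zero_le (Int.floor_nonneg.2
    (mul_nonneg hDpos.le (sub_nonneg.2 hps.le)))
  have hfloor : ⌊D * (s - p)⌋ < ⌊D * (t - p)⌋ := by
    have : (⌊D * (s - p)⌋ : ℝ) < ⌊D * (t - p)⌋ := by linarith
    exact_mod_cast this
  obtain ⟨n, hn⟩ := Int.eq_ofNat_of_zero_le (sub_nonneg.2 hfloor.le)
  have hk : ⌊D * (t - p)⌋ = i + n := by omega
  rw [hi] at hfs
  rw [hk] at hft
  push_cast at hfs hft
  have his : (i : ℝ) / D < s - p := (div_lt_iff₀' hDpos).2 (by linarith)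
  have hsi : s - p < (i + 1) / D := (lt_div_iff₀' hDpos).2 (by linarith)
  have hnt : (i + n : ℝ) / D ≤ t - p := (div_le_iff₀' hDpos).2 (by linarith)
  have htn : t - s < n / D := (lt_div_iff₀' hDpos).2 (by linarith)
  rw [add_div] at hsi hnt
  have hsnt : s + n / D ≤ t := add_div_le_of_add_div_le hD hrel hθ hmaps hinj hp hs ht htp (i := i)
    (by omega) (by linarith) (by linarith) (by linarith)
  linarith

theorem disjoint_closure_unlClass_ratC (hD : 2 ≤ D) (hrel : lam.ForwardInvariant D)
    (hθ : θ ∉ ratC) (hmaps : MapsTo (md D) (lam.unlClass θ) (lam.unlClass θ))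
    (hinj : InjOn (md D) (lam.unlClass θ)) (hne : (lam.unlClass θ).Nonempty) :
    Disjoint (closure (lam.unlClass θ)) ratC := by
  refine disjoint_left.2 fun c hc hcQ => ?_
  obtain ⟨a, k, hk, hper⟩ := exists_iterate_md_isPeriodicPt (D := D) hcQ
  have hcycle := preservesCyclicOrderOn_unlClass (pow_pos (by omega) k) (hrel.pow k) hθ
    (iterate_md D k ▸ hmaps.iterate k) (iterate_md D k ▸ hinj.iterate hmaps k)
  refine hcycle.md_ne_self (hD.trans (Nat.le_self_pow hk.ne' D)) (iterate_md D k ▸ hmaps.iterate k)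
    (disjoint_left.2 fun y hy => hy.1) hne ((hmaps.closure (continuous_md D)).iterate a hc) ?_
    (iterate_md D k ▸ hper)
  rwa [iterate_md, md_mem_ratC_iff (pow_ne_zero a (by omega))]

theorem not_injOn_md_of_infinite (hD : 2 ≤ D) (hrel : lam.ForwardInvariant D) (hθ : θ ∉ ratC)
    (hmaps : MapsTo (md D) (lam.unlClass θ) (lam.unlClass θ)) (hinf : (lam.unlClass θ).Infinite) :
    ¬ InjOn (md D) (lam.unlClass θ) := by
  intro hinj
  have hQ := disjoint_closure_unlClass_ratC hD hrel hθ hmaps hinj hinf.nonempty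
  have hclosed : IsClosed (lam.unlClass θ) := isClosed_of_closure_subset fun y hy =>
    (lam.closure_unlClass_subset θ hy).resolve_right (disjoint_left.1 hQ hy)
  exact hinf ((expandsBelow_md (by omega : 0 < D)).finite_of_injOn (by exact_mod_cast hD)
    (by positivity) hclosed.isCompact (continuous_md D).continuousOn hmaps hinj)

end RatLam

/-! ### Total degree -/

theorem InvRatLam.forwardInvariant {d : ℕ} (lam : InvRatLam d) :
    lam.toRatLam.ForwardInvariant d := by
  intro x y hxy
  have himage : md d '' relClass lam.rel x = relClass lam.rel (md d x) :=
    (lam.invariant x (lam.rel_rat _ _ hxy).1).1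
  exact himage.subset (mem_image_of_mem _ hxy)

namespace classDeg

variable {d δ : ℕ} {A : Set Circle1}

theorem pos (h : classDeg d A δ) (hd : 0 < d) (hA : A.Nonempty) : 0 < δ := by
  obtain ⟨x, hx⟩ := hA
  rw [← h _ (mem_image_of_mem _ hx)]
  exact (ncard_pos ((finite_preimage_md hd _).subset fun w hw => hw.2)).2 ⟨x, hx, rfl⟩

theorem injOn (h : classDeg d A 1) : InjOn (md d) A := by
  intro x hx y hy hxy
  obtain ⟨w, hw⟩ := ncard_eq_one.1 (h _ (mem_image_of_mem _ hx))
  have hxw : x ∈ ({w} : Set Circle1) := hw ▸ ⟨hx, rfl⟩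
  have hyw : y ∈ ({w} : Set Circle1) := hw ▸ ⟨hy, hxy.symm⟩
  exact hxw.trans hyw.symm

end classDeg

theorem periodic_infinite_class_total_degree_gt_one_general {d : ℕ} (hd : 2 ≤ d) {lam : RatLam}
    (hrel : lam.ForwardInvariant d) {L : Set Circle1} (hL : IsUnlClass lam.rel L)
    (hinf : L.Infinite) {n : ℕ} (hn : 0 < n) (hmaps : MapsTo (md d)^[n] L L)
    {δf : ℕ → ℕ} (hδ : ∀ k < n, classDeg d ((md d)^[k] '' L) (δf k)) :
    1 < ∏ k ∈ Finset.range n, δf k := by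
  have hpos : ∀ k ∈ Finset.range n, 1 ≤ δf k := fun k hk =>
    (hδ k (Finset.mem_range.1 hk)).pos (by omega) (hinf.nonempty.image _)
  by_contra! hle
  have hone (k : ℕ) (hk : k < n) : δf k = 1 :=
    (Finset.prod_eq_one_iff_of_one_le' hpos).1
      (hle.antisymm (Finset.one_le_prod' hpos)) k (Finset.mem_range.2 hk)
  have hinj : InjOn (md d)^[n] L :=
    injOn_iterate_of_injOn_image fun k hk => (hone k hk ▸ hδ k hk).injOn
  obtain ⟨θ, hθ, rfl⟩ := RatLam.exists_eq_unlClass hL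
  rw [iterate_md] at hmaps hinj
  exact RatLam.not_injOn_md_of_infinite (hd.trans (Nat.le_self_pow hn.ne' d)) (hrel.pow n) hθ
    hmaps hinf hinj

/-- If `L` is an infinite `λ`-unlinked class which is periodic,
`m_d^n(L) = L` with `n > 0`, then the total degree `∏_{k<n} δ(m_d^k(L))` is `> 1`. -/
theorem periodic_infinite_class_total_degree_gt_one (d : ℕ) (hd : 2 ≤ d)
    (lam : InvRatLam d) (L : Set Circle1) (hL : IsUnlClass lam.rel L)
    (hinf : L.Infinite) (n : ℕ) (hn : 0 < n) (hper : (md d)^[n] '' L = L)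
    (δf : ℕ → ℕ) (hδ : ∀ k < n, classDeg d ((md d)^[k] '' L) (δf k)) :
    1 < ∏ k ∈ Finset.range n, δf k := by
  exact periodic_infinite_class_total_degree_gt_one_general hd lam.forwardInvariant hL hinf hn
    (mapsTo_iff_image_subset.2 hper.subset) hδ
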